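/- Let W : Ω → ℝ^{d_w} be a measurable random variable on a probability space (Ω, P), let D ⊆ ℝ^{d_w} be a closed set with P {W ∈ D} = 1 such that every open set U ⊆ ℝ^{d_w} with U ∩ D nonempty satisfies P {W ∈ U} > 0, and let h : ℝ^{d_w} → ℝ be continuous. Then for every w ∈ D and every ε > 0 there exists a risk level α ∈ (0,1) such that VaR_α(h(W)) ≤ h(w) + ε. -/

import Mathlib

open MeasureTheory Set

/-- Value-at-risk of a real random variable `X` at level `α`. -/
noncomputable def VaR {Ω : Type*} [MeasurableSpace Ω] (P : Measure Ω)
    (X : Ω → ℝ) (α : ℝ) : ℝ :=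
  sInf {w : ℝ | ENNReal.ofReal α ≤ P {ω | X ω ≤ w}}

/-! By upper semicontinuity, `h ≤ h w + ε` on a neighbourhood of `w`, which `W` charges,
so `p = P {h(W) ≤ h w + ε} > 0` and `h w + ε` is an admissible threshold at every level `α ≤ p`.
The infimum of the thresholds is genuine, not the junk value of an infimum unbounded below, because
the distribution function of `h(W)` tends to `0` at `-∞` and so falls below `α > 0`. -/

open Filter Topology
open scoped ENNReal

section DistributionFunction

variable {Ω R : Type*} [MeasurableSpace Ω] {P : Measure Ω} [IsFiniteMeasure P]
  [LinearOrder R] [Nonempty R] [NoMinOrder R] [IsCountablyGenerated (atBot : Filter R)]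
  [TopologicalSpace R] [ClosedIicTopology R] [MeasurableSpace R] [OpensMeasurableSpace R]
  {X : Ω → R}

theorem tendsto_measure_setOf_le_atBot (hX : AEMeasurable X P) :
    Tendsto (fun x => P {ω | X ω ≤ x}) atBot (𝓝 0) := by
  have hInter : ⋂ x, {ω | X ω ≤ x} = ∅ := by
    refine eq_empty_of_forall_notMem fun ω hω => ?_
    obtain ⟨y, hy⟩ := exists_lt (X ω)
    exact hy.not_ge (mem_iInter.1 hω y)
  have hMono : Monotone fun x => {ω | X ω ≤ x} := fun _ _ hxy _ hω => le_trans hω hxy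
  have hLim : Tendsto (fun x => P {ω | X ω ≤ x}) atBot (𝓝 (P (⋂ x, {ω | X ω ≤ x}))) :=
    tendsto_measure_iInter_atBot (fun _ => hX.nullMeasurable measurableSet_Iic) hMono
      ⟨Classical.arbitrary R, measure_ne_top P _⟩
  rwa [hInter, measure_empty] at hLim

theorem bddBelow_setOf_le_measure_setOf_le (hX : AEMeasurable X P) {c : ℝ≥0∞} (hc : 0 < c) :
    BddBelow {x | c ≤ P {ω | X ω ≤ x}} := by
  obtain ⟨a, ha⟩ := eventually_atBot.1 ((tendsto_measure_setOf_le_atBot hX).eventually_lt_const hc)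
  exact ⟨a, fun x hx => le_of_not_ge fun hxa => (ha x hxa).not_ge hx⟩

end DistributionFunction

section ValueAtRisk

variable {Ω : Type*} [MeasurableSpace Ω] {P : Measure Ω} [IsFiniteMeasure P] {X : Ω → ℝ}

theorem VaR_le_of_ofReal_le_measure (hX : AEMeasurable X P) {α x : ℝ} (hα : 0 < α)
    (hx : ENNReal.ofReal α ≤ P {ω | X ω ≤ x}) : VaR P X α ≤ x :=
  csInf_le (bddBelow_setOf_le_measure_setOf_le hX (ENNReal.ofReal_pos.2 hα)) hx

theorem exists_VaR_le_of_measure_pos (hX : AEMeasurable X P) {x : ℝ}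
    (hx : 0 < P {ω | X ω ≤ x}) : ∃ α ∈ Ioo (0 : ℝ) 1, VaR P X α ≤ x := by
  obtain ⟨α, -, hα_pos, hα_lt⟩ := ENNReal.lt_iff_exists_real_btwn.1 (lt_min hx one_pos)
  rw [ENNReal.ofReal_pos] at hα_pos
  rw [lt_min_iff, ENNReal.ofReal_lt_one] at hα_lt
  exact ⟨α, ⟨hα_pos, hα_lt.2⟩, VaR_le_of_ofReal_le_measure hX hα_pos hα_lt.1.le⟩

theorem stmt13_general {E : Type*} [TopologicalSpace E] {W : Ω → E} {h : E → ℝ}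
    (hX : AEMeasurable (fun ω => h (W ω)) P) {w : E}
    (hw : ∀ U : Set E, IsOpen U → w ∈ U → 0 < P {ω | W ω ∈ U})
    (hh : UpperSemicontinuousAt h w) {ε : ℝ} (hε : 0 < ε) :
    ∃ α ∈ Ioo (0 : ℝ) 1, VaR P (fun ω => h (W ω)) α ≤ h w + ε := by
  obtain ⟨U, hU, hU_open, hwU⟩ := eventually_nhds_iff.1 (hh (h w + ε) (lt_add_of_pos_right _ hε))
  have hU_sub : {ω | W ω ∈ U} ⊆ {ω | h (W ω) ≤ h w + ε} := fun ω hω => (hU (W ω) hω).le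
  exact exists_VaR_le_of_measure_pos hX ((hw U hU_open hwU).trans_le (measure_mono hU_sub))

end ValueAtRisk

theorem stmt13 {Ω : Type*} [MeasurableSpace Ω] (P : Measure Ω)
    [IsProbabilityMeasure P] {dw : ℕ} (W : Ω → (Fin dw → ℝ)) (hW : Measurable W)
    (D : Set (Fin dw → ℝ)) (hD_closed : IsClosed D) (hD_prob : P {ω | W ω ∈ D} = 1)
    (hD_supp : ∀ U : Set (Fin dw → ℝ), IsOpen U → (U ∩ D).Nonempty →
      0 < P {ω | W ω ∈ U})
    (h : (Fin dw → ℝ) → ℝ) (hh : Continuous h) :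
    ∀ w ∈ D, ∀ ε : ℝ, 0 < ε → ∃ α ∈ Set.Ioo (0 : ℝ) 1,
      VaR P (fun ω => h (W ω)) α ≤ h w + ε := by
  intro w hw ε hε
  exact stmt13_general (W := W) (h := h) (hh.measurable.comp hW).aemeasurable
    (fun U hU hwU => hD_supp U hU ⟨w, hwU, hw⟩) hh.continuousAt.upperSemicontinuousAt hε
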